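/- arXiv:1903.08771 — 4 statements merged into one kernel-verified Lean document; each statement's English description precedes it below -/
import Mathlib

section
/- Let Ω ⊆ ℝⁿ be a bounded open set and let q : Ω → ℝ be a bounded measurable function. Then there exists a sequence (ψ_k)_{k∈ℕ} of functions ψ_k ∈ Σ such that for every k ∈ ℕ one has q(x) − 1/k ≤ ψ_k(x) ≤ q(x) for almost every x ∈ Ω. -/
open MeasureTheory

/-- A measurable set `M ⊆ ℝⁿ` is a density one set if it is non-empty and every `x ∈ M`
is a Lebesgue density point of `M`. -/
def DensityOneSet {n : ℕ} (M : Set (EuclideanSpace ℝ (Fin n))) : Prop :=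
  MeasurableSet M ∧ M.Nonempty ∧ ∀ x ∈ M,
    Filter.Tendsto (fun r : ℝ => volume (M ∩ Metric.ball x r) / volume (Metric.ball x r))
      (nhdsWithin 0 (Set.Ioi 0)) (nhds 1)

/-- `ψ` is a density one simple function on `Ω`, i.e. a finite linear combination of
indicator functions of density one subsets of `Ω`. -/
def DensityOneSimple {n : ℕ} (Ω : Set (EuclideanSpace ℝ (Fin n)))
    (ψ : EuclideanSpace ℝ (Fin n) → ℝ) : Prop :=
  ∃ (m : ℕ) (a : Fin m → ℝ) (M : Fin m → Set (EuclideanSpace ℝ (Fin n))),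
    (∀ j, DensityOneSet (M j) ∧ M j ⊆ Ω) ∧
    ψ = fun x => ∑ j, a j * (M j).indicator (fun _ => (1 : ℝ)) x

/-!
The step function `ε * ⌊q / ε⌋` lies between `q - ε` and `q`, and takes finitely many values because
`q` is bounded. By the Lebesgue density theorem each of its level sets agrees, up to a null set,
with the set of its own density points that it contains, and passing to an almost everywhere equal
set preserves density points. Level sets that shrink to the empty set in this way are null and are
dropped from the sum.
-/

section DensityPoints

open Filter Metric Topology

variable {E : Type*} [NormedAddCommGroup E] [NormedSpace ℝ E] [FiniteDimensional ℝ E]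
  [MeasurableSpace E] [BorelSpace E] (μ : Measure E) [μ.IsAddHaarMeasure]

theorem ball_ae_eq_closedBall (x : E) {r : ℝ} (hr : r ≠ 0) : ball x r =ᵐ[μ] closedBall x r := by
  rw [← closedBall_sdiff_sphere]
  exact sdiff_null_ae_eq_self (μ.addHaar_sphere_of_ne_zero x hr)

theorem ae_tendsto_measure_inter_ball_div (s : Set E) :
    ∀ᵐ x ∂μ.restrict s, Tendsto (fun r ↦ μ (s ∩ ball x r) / μ (ball x r)) (𝓝[>] 0) (𝓝 1) := by
  filter_upwards [Besicovitch.ae_tendsto_measure_inter_div μ s] with x hx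
  refine hx.congr' ?_
  filter_upwards [self_mem_nhdsWithin] with r (hr : 0 < r)
  have hball := ball_ae_eq_closedBall μ x hr.ne'
  rw [measure_congr hball, measure_congr ((ae_eq_refl s).inter hball)]

end DensityPoints

section StepFunctions

variable {α : Type*} [MeasurableSpace α] {q : α → ℝ} {ε : ℝ}

theorem exists_simpleFunc_mem_Icc_sub_self {a b : ℝ} (hq : Measurable q)
    (hab : ∀ x, q x ∈ Set.Icc a b) (hε : 0 < ε) :
    ∃ s : SimpleFunc α ℝ, ∀ x, s x ∈ Set.Icc (q x - ε) (q x) := by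
  have floor_mem (x : α) : ⌊q x / ε⌋ ∈ Set.Icc ⌊a / ε⌋ ⌊b / ε⌋ :=
    ⟨by gcongr; exact (hab x).1, by gcongr; exact (hab x).2⟩
  let s : SimpleFunc α ℝ :=
    { toFun := fun x ↦ ⌊q x / ε⌋ * ε
      measurableSet_fiber' := fun y ↦
        (by fun_prop : Measurable fun x ↦ (⌊q x / ε⌋ : ℝ) * ε) (measurableSet_singleton y)
      finite_range' := ((Set.finite_Icc ⌊a / ε⌋ ⌊b / ε⌋).image fun k : ℤ ↦ (k : ℝ) * ε).subset
        (Set.range_subset_iff.2 fun x ↦ Set.mem_image_of_mem _ (floor_mem x)) }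
  refine ⟨s, fun x ↦ ⟨?_, ?_⟩⟩
  · exact (sub_lt_comm.1 (Int.sub_floor_div_mul_lt (q x) hε)).le
  · exact sub_nonneg.1 (Int.sub_floor_div_mul_nonneg (q x) hε)

theorem exists_simpleFunc_ae_mem_Icc_sub_self {μ : Measure α} {C : ℝ} (hq : AEMeasurable q μ)
    (hC : ∀ᵐ x ∂μ, |q x| ≤ C) (hε : 0 < ε) :
    ∃ s : SimpleFunc α ℝ, ∀ᵐ x ∂μ, s x ∈ Set.Icc (q x - ε) (q x) := by
  -- `|C|` instead of `C`, since a negative `C` is possible when `μ = 0`.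
  have q_mem : ∀ᵐ x ∂μ, q x ∈ Set.Icc (-|C|) |C| :=
    hC.mono fun x hx ↦ abs_le.1 (hx.trans (le_abs_self C))
  obtain ⟨g, hg, g_range, hqg⟩ := hq.exists_ae_eq_range_subset q_mem ⟨0, by simp⟩
  obtain ⟨s, hs⟩ := exists_simpleFunc_mem_Icc_sub_self hg (Set.range_subset_iff.1 g_range) hε
  refine ⟨s, ?_⟩
  filter_upwards [hqg] with x hx
  exact hx ▸ hs x

end StepFunctions

section DensityOne

open Filter Metric Topology

variable {n : ℕ} {Ω : Set (EuclideanSpace ℝ (Fin n))}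

theorem exists_subset_ae_eq_densityOneSet {A : Set (EuclideanSpace ℝ (Fin n))}
    (hA : NullMeasurableSet A) :
    ∃ M ⊆ A, M =ᵐ[volume] A ∧ (M.Nonempty → DensityOneSet M) := by
  let D := {x | Tendsto (fun r ↦ volume (A ∩ ball x r) / volume (ball x r)) (𝓝[>] 0) (𝓝 1)}
  have hAD : (A ∩ D : Set _) =ᵐ[volume] A := by
    rw [inter_eventuallyEq_left, ← ae_restrict_iff'₀ hA]
    exact ae_tendsto_measure_inter_ball_div volume A
  obtain ⟨M, hM_sub, hM, hM_eq⟩ := (hA.congr hAD.symm).exists_measurable_subset_ae_eq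
  have hMA : M =ᵐ[volume] A := hM_eq.trans hAD
  refine ⟨M, hM_sub.trans Set.inter_subset_left, hMA, fun hne ↦ ⟨hM, hne, fun x hx ↦ ?_⟩⟩
  have hxD : x ∈ D := (hM_sub hx).2
  simpa only [D, Set.mem_ofPred_eq, measure_congr (hMA.inter (ae_eq_refl (ball x _)))] using hxD

namespace DensityOneSimple

theorem zero : DensityOneSimple Ω 0 :=
  ⟨0, Fin.elim0, Fin.elim0, fun j ↦ j.elim0, by ext; simp⟩

theorem add {φ ψ : EuclideanSpace ℝ (Fin n) → ℝ} (hφ : DensityOneSimple Ω φ)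
    (hψ : DensityOneSimple Ω ψ) : DensityOneSimple Ω (φ + ψ) := by
  obtain ⟨l, a, M, hM, rfl⟩ := hφ
  obtain ⟨m, b, N, hN, rfl⟩ := hψ
  refine ⟨l + m, Fin.append a b, Fin.append M N, fun j ↦ ?_, ?_⟩
  · induction j using Fin.addCases with
    | left i => simpa only [Fin.append_left] using hM i
    | right i => simpa only [Fin.append_right] using hN i
  · ext x
    simp only [Pi.add_apply, Fin.sum_univ_add, Fin.append_left, Fin.append_right]

theorem indicator_const {M : Set (EuclideanSpace ℝ (Fin n))} (hM : DensityOneSet M) (hMΩ : M ⊆ Ω)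
    (c : ℝ) : DensityOneSimple Ω (M.indicator fun _ ↦ c) := by
  refine ⟨1, fun _ ↦ c, fun _ ↦ M, fun _ ↦ ⟨hM, hMΩ⟩, ?_⟩
  ext x
  simp [← Set.indicator_const_mul]

end DensityOneSimple

theorem exists_densityOneSimple_ae_eq_indicator_const (hΩ : NullMeasurableSet Ω)
    {A : Set (EuclideanSpace ℝ (Fin n))} (hA : NullMeasurableSet A (volume.restrict Ω)) (c : ℝ) :
    ∃ ψ, DensityOneSimple Ω ψ ∧ ψ =ᵐ[volume.restrict Ω] A.indicator fun _ ↦ c := by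
  obtain ⟨M, hM_sub, hM_eq, hM⟩ :=
    exists_subset_ae_eq_densityOneSet ((nullMeasurableSet_restrict hΩ).1 hA)
  have hMA : M =ᵐ[volume.restrict Ω] A := by
    have hΩ_univ : Ω =ᵐ[volume.restrict Ω] Set.univ := eventuallyEq_univ.2 (ae_restrict_mem₀ hΩ)
    exact (hM_eq.filter_mono (ae_mono Measure.restrict_le_self)).trans
      (inter_ae_eq_left_of_ae_eq_univ hΩ_univ)
  refine ⟨M.indicator fun _ ↦ c, ?_, indicator_ae_eq_of_ae_eq_set hMA⟩
  rcases M.eq_empty_or_nonempty with rfl | hne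
  · rw [Set.indicator_empty]
    exact .zero
  · exact .indicator_const (hM hne) (hM_sub.trans Set.inter_subset_right) c

theorem exists_densityOneSimple_ae_eq_simpleFunc (hΩ : NullMeasurableSet Ω)
    (s : SimpleFunc (EuclideanSpace ℝ (Fin n)) ℝ) :
    ∃ ψ, DensityOneSimple Ω ψ ∧ ψ =ᵐ[volume.restrict Ω] s := by
  induction s using SimpleFunc.induction with
  | const c hA =>
    obtain ⟨ψ, hψ, hψA⟩ :=
      exists_densityOneSimple_ae_eq_indicator_const hΩ hA.nullMeasurableSet c
    refine ⟨ψ, hψ, ?_⟩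
    simp only [SimpleFunc.coe_piecewise, SimpleFunc.const_zero, SimpleFunc.coe_zero,
      Set.piecewise_eq_indicator]
    exact hψA
  | add _ ihs iht =>
    obtain ⟨φ, hφ, hφs⟩ := ihs
    obtain ⟨ψ, hψ, hψt⟩ := iht
    exact ⟨φ + ψ, hφ.add hψ, hφs.add hψt⟩

theorem exists_densityOneSimple_approx_general (hΩ : NullMeasurableSet Ω)
    {q : EuclideanSpace ℝ (Fin n) → ℝ} (hq : AEMeasurable q (volume.restrict Ω))
    {C : ℝ} (hC : ∀ᵐ x ∂(volume.restrict Ω), |q x| ≤ C) {ε : ℝ} (hε : 0 < ε) :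
    ∃ ψ, DensityOneSimple Ω ψ ∧ ∀ᵐ x ∂(volume.restrict Ω), q x - ε ≤ ψ x ∧ ψ x ≤ q x := by
  obtain ⟨s, hs⟩ := exists_simpleFunc_ae_mem_Icc_sub_self hq hC hε
  obtain ⟨ψ, hψ, hψs⟩ := exists_densityOneSimple_ae_eq_simpleFunc hΩ s
  refine ⟨ψ, hψ, ?_⟩
  filter_upwards [hs, hψs] with x hx hψx
  exact hψx ▸ hx

end DensityOne

/-- (approximation step in the proof of Lemma 4.4 of the paper): a bounded
measurable `q` on a bounded open `Ω ⊆ ℝⁿ` can be approximated from below by a sequence of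
density one simple functions `ψ_k` with `q - 1/k ≤ ψ_k ≤ q` a.e. on `Ω`. -/
theorem exists_densityOneSimple_approx
    {n : ℕ} (Ω : Set (EuclideanSpace ℝ (Fin n)))
    (hΩopen : IsOpen Ω) (hΩbdd : Bornology.IsBounded Ω)
    (q : EuclideanSpace ℝ (Fin n) → ℝ) (hq : Measurable q)
    (C : ℝ) (hqbdd : ∀ x ∈ Ω, |q x| ≤ C) :
    ∃ ψ : ℕ → EuclideanSpace ℝ (Fin n) → ℝ,
      ∀ k : ℕ, 0 < k → DensityOneSimple Ω (ψ k) ∧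
        ∀ᵐ x ∂(volume.restrict Ω), q x - 1 / (k : ℝ) ≤ ψ k x ∧ ψ k x ≤ q x := by
  choose! ψ hψ using fun (k : ℕ) (hk : 0 < k) ↦
    exists_densityOneSimple_approx_general hΩopen.nullMeasurableSet hq.aemeasurable
      (ae_restrict_of_forall_mem hΩopen.measurableSet hqbdd) (Nat.one_div_cast_pos hk.ne')
  exact ⟨ψ, hψ⟩
end

section
/- Let Ω ⊆ ℝⁿ be a bounded open set with positive Lebesgue measure, let Q be a finite-dimensional subspace of L^∞(Ω), and let Q₁ = { r ∈ Q : ‖r‖_{L^∞(Ω)} = 1 }. Then there exist m ∈ ℕ and measurable subsets M₁, …, M_m ⊆ Ω, each of positive Lebesgue measure, such that for every r ∈ Q₁ there exists j ∈ {1, …, m} with either r(x) ≥ 1/2 for almost every x ∈ M_j, or r(x) ≤ −1/2 for almost every x ∈ M_j. -/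
/-!
Let `max c 0 < a < b`. If `b ≤ ‖s‖_∞`, then one of the sets `{a < s}` and `{s < -a}` has positive
measure, and every `r` within `a - c` of `s` satisfies `c ≤ r`, respectively `r ≤ -c`, almost
everywhere on it. A totally bounded set, such as the unit sphere of a finite-dimensional subspace,
has a finite `(a - c)`-net, so finitely many of these sets suffice.
-/

open MeasureTheory

open scoped ENNReal

section FiniteDimensionalSphere

variable {𝕜 E : Type*} [NontriviallyNormedField 𝕜] [LocallyCompactSpace 𝕜]
  [NormedAddCommGroup E] [NormedSpace 𝕜 E]

lemma isCompact_submodule_inter_sphere (Q : Submodule 𝕜 E) [FiniteDimensional 𝕜 Q] (ρ : ℝ) :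
    IsCompact ((Q : Set E) ∩ Metric.sphere 0 ρ) := by
  have : ProperSpace Q := FiniteDimensional.proper 𝕜 Q
  convert (isCompact_sphere (0 : Q) ρ).image continuous_subtype_val using 1
  ext r
  simp [and_comm]

end FiniteDimensionalSphere

section LInfty

variable {α E : Type*} [MeasurableSpace α] [NormedAddCommGroup E] {μ : Measure α}

lemma ae_norm_le_Lp_top_norm (f : Lp E ∞ μ) : ∀ᵐ x ∂μ, ‖f x‖ ≤ ‖f‖ := by
  rw [Lp.norm_def, toReal_eLpNorm (Lp.aestronglyMeasurable f)]
  exact ae_le_lpNorm_exponent_top (Lp.memLp f)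

lemma frequently_ae_lt_norm_of_lt_Lp_top_norm {f : Lp E ∞ μ} {a : ℝ} (ha : 0 ≤ a) (haf : a < ‖f‖) :
    ∃ᵐ x ∂μ, a < ‖f x‖ := by
  contrapose! haf
  rw [Lp.norm_def, eLpNorm_exponent_top]
  refine ENNReal.toReal_le_of_le_ofReal ha (eLpNormEssSup_le_of_ae_bound ?_)
  simpa using haf

end LInfty

section TestSets

variable {α : Type*} [MeasurableSpace α] {μ : Measure α} {M Ω : Set α} {a b c : ℝ}

/-- `M` is a test set for `f` at level `c`: up to a `μ`-null set, either `f ≥ c` throughout `M` or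
`f ≤ -c` throughout `M`. -/
def IsTestSet (μ : Measure α) (c : ℝ) (M : Set α) (f : α → ℝ) : Prop :=
  (∀ᵐ x ∂μ, x ∈ M → c ≤ f x) ∨ (∀ᵐ x ∂μ, x ∈ M → f x ≤ -c)

lemma IsTestSet.of_dist_le {r s : Lp ℝ ∞ μ} (hs : IsTestSet μ a M s) (hrs : dist r s ≤ a - c) :
    IsTestSet μ c M r := by
  have hdiff : ∀ᵐ x ∂μ, |r x - s x| ≤ a - c := by
    filter_upwards [ae_norm_le_Lp_top_norm (r - s), Lp.coeFn_sub r s] with x hx hsub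
    rw [hsub, ← dist_eq_norm r s] at hx
    exact hx.trans hrs
  refine hs.imp (fun hs => ?_) (fun hs => ?_) <;>
    filter_upwards [hdiff, hs] with x hdiff hs hxM <;>
    linarith [abs_le.mp hdiff, hs hxM]

lemma exists_measurableSet_isTestSet {f : Lp ℝ ∞ μ} (hΩ : MeasurableSet Ω)
    (hμΩ : ∀ᵐ x ∂μ, x ∈ Ω) (ha : 0 ≤ a) (haf : a < ‖f‖) :
    ∃ M, (MeasurableSet M ∧ M ⊆ Ω ∧ 0 < μ M) ∧ IsTestSet μ a M f := by
  have hf : Measurable f := (Lp.stronglyMeasurable f).measurable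
  have hlarge : (∃ᵐ x ∂μ, a < f x) ∨ ∃ᵐ x ∂μ, a < -f x := by
    simpa only [Real.norm_eq_abs, lt_abs, Filter.frequently_or_distrib] using
      frequently_ae_lt_norm_of_lt_Lp_top_norm ha haf
  rcases hlarge with hpos | hneg
  · refine ⟨{x | a < f x ∧ x ∈ Ω}, ⟨(measurableSet_lt measurable_const hf).inter hΩ,
      fun _ hx => hx.2, ?_⟩, Or.inl (.of_forall fun x hx => hx.1.le)⟩
    exact pos_iff_ne_zero.mpr (frequently_ae_iff.mp (hpos.and_eventually hμΩ))
  · refine ⟨{x | a < -f x ∧ x ∈ Ω}, ⟨(measurableSet_lt measurable_const hf.neg).inter hΩ,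
      fun _ hx => hx.2, ?_⟩, Or.inr (.of_forall fun x hx => (lt_neg.mp hx.1).le)⟩
    exact pos_iff_ne_zero.mpr (frequently_ae_iff.mp (hneg.and_eventually hμΩ))

lemma exists_isTestSet_family_of_totallyBounded {S : Set (Lp ℝ ∞ μ)} (hS : TotallyBounded S)
    (hb : 0 < b) (hSb : ∀ f ∈ S, b ≤ ‖f‖) (hcb : c < b) (hΩ : MeasurableSet Ω)
    (hμΩ : ∀ᵐ x ∂μ, x ∈ Ω) :
    ∃ (m : ℕ) (M : Fin m → Set α), (∀ j, MeasurableSet (M j) ∧ M j ⊆ Ω ∧ 0 < μ (M j)) ∧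
      ∀ r ∈ S, ∃ j, IsTestSet μ c (M j) r := by
  obtain ⟨a, hca, hab⟩ := exists_between (max_lt hcb hb)
  rw [max_lt_iff] at hca
  obtain ⟨t, htS, htfin, hcover⟩ :=
    Metric.finite_approx_of_totallyBounded hS (a - c) (sub_pos.mpr hca.1)
  obtain ⟨m, s, -, rfl⟩ := htfin.fin_param
  have htest (j : Fin m) := exists_measurableSet_isTestSet hΩ hμΩ hca.2.le
    (hab.trans_le (hSb (s j) (htS ⟨j, rfl⟩)))
  choose M hM hMs using htest
  refine ⟨m, M, hM, fun r hr => ?_⟩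
  obtain ⟨j, hj⟩ : ∃ j, dist r (s j) < a - c := by simpa using hcover hr
  exact ⟨j, (hMs j).of_dist_le hj.le⟩

theorem exists_test_sets_for_finiteDimensional_Linfty_general (hΩ : MeasurableSet Ω)
    (Q : Submodule ℝ (Lp ℝ ∞ (μ.restrict Ω))) [FiniteDimensional ℝ Q] (hc : c < 1) :
    ∃ (m : ℕ) (M : Fin m → Set α), (∀ j, MeasurableSet (M j) ∧ M j ⊆ Ω ∧ 0 < μ (M j)) ∧
      ∀ r ∈ Q, ‖r‖ = 1 → ∃ j, IsTestSet (μ.restrict Ω) c (M j) r := by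
  have hsphere : TotallyBounded ((Q : Set (Lp ℝ ∞ (μ.restrict Ω))) ∩ Metric.sphere 0 1) :=
    (isCompact_submodule_inter_sphere Q 1).totallyBounded
  obtain ⟨m, M, hM, htest⟩ := exists_isTestSet_family_of_totallyBounded hsphere one_pos
    (fun f hf => (mem_sphere_zero_iff_norm.mp hf.2).ge) hc hΩ (ae_restrict_mem hΩ)
  refine ⟨m, M, fun j => ?_, fun r hr hr1 => htest r ⟨hr, mem_sphere_zero_iff_norm.mpr hr1⟩⟩
  obtain ⟨hmeas, hsub, hpos⟩ := hM j
  exact ⟨hmeas, hsub, Measure.restrict_eq_self μ hsub ▸ hpos⟩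

end TestSets

/-- (Lemma 5.4 of the paper): if `Q` is a finite-dimensional subspace of
`L^∞(Ω)` on a bounded open `Ω ⊆ ℝⁿ` of positive measure, then there are finitely many
measurable subsets `M₁,…,M_m ⊆ Ω` of positive measure such that every `r ∈ Q` with
`‖r‖_{L^∞} = 1` satisfies `r ≥ 1/2` a.e. on some `M_j` or `r ≤ -1/2` a.e. on some `M_j`. -/
theorem exists_test_sets_for_finiteDimensional_Linfty
    {n : ℕ} (Ω : Set (EuclideanSpace ℝ (Fin n)))
    (hΩopen : IsOpen Ω) (hΩbdd : Bornology.IsBounded Ω) (hΩpos : 0 < volume Ω)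
    (Q : Submodule ℝ (Lp ℝ ⊤ (volume.restrict Ω)))
    (hQ : FiniteDimensional ℝ Q) :
    ∃ (m : ℕ) (M : Fin m → Set (EuclideanSpace ℝ (Fin n))),
      (∀ j, MeasurableSet (M j) ∧ M j ⊆ Ω ∧ 0 < volume (M j)) ∧
      ∀ r ∈ Q, ‖r‖ = 1 →
        ∃ j, (∀ᵐ x ∂(volume.restrict Ω), x ∈ M j → (1 / 2 : ℝ) ≤ r x) ∨
             (∀ᵐ x ∂(volume.restrict Ω), x ∈ M j → r x ≤ -(1 / 2 : ℝ)) :=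
  exists_test_sets_for_finiteDimensional_Linfty_general hΩopen.measurableSet Q (by norm_num)
end

section
/- Let H be a real Hilbert space, let H₁, H₂, H₃ ⊆ H be closed subspaces of finite codimension in H, and let L₁ : H₁ → H, L₂ : H₂ → H, L₃ : H₃ → H be bounded linear operators. Suppose L₁ ≤_{d₁} L₂ and L₂ ≤_{d₂} L₃ for natural numbers d₁, d₂. Then L₁ ≤_{d} L₃ with d = d₁ + d₂ + codim(H₂). -/
open scoped RealInnerProductSpace

/-- The generalized Loewner order `L₁ ≤_d L₂` (Definition 3.1 of the paper): there exists a
subspace `W ⊆ H₁ ∩ H₂` with `dim W ≤ d` such that `⟨L₂ v - L₁ v, v⟩ ≥ 0` for all `v` in the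
orthogonal complement of `W` taken inside `H₁ ∩ H₂`. -/
def LoewnerLE {H : Type*} [NormedAddCommGroup H] [InnerProductSpace ℝ H]
    {H₁ H₂ : Submodule ℝ H} (L₁ : H₁ →L[ℝ] H) (L₂ : H₂ →L[ℝ] H) (d : ℕ) : Prop :=
  ∃ W : Submodule ℝ H, W ≤ H₁ ⊓ H₂ ∧ FiniteDimensional ℝ W ∧ Module.finrank ℝ W ≤ d ∧
    ∀ (v : H) (h₁ : v ∈ H₁) (h₂ : v ∈ H₂),
      (∀ w ∈ W, ⟪v, w⟫ = 0) → 0 ≤ ⟪L₂ ⟨v, h₂⟩ - L₁ ⟨v, h₁⟩, v⟫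

/-!
On `H₁ ⊓ H₂ ⊓ H₃` the quadratic forms of `L₂ - L₁` and `L₃ - L₂` add up to that of `L₃ - L₁`, so
the latter is nonnegative on the part of `H₁ ⊓ H₃` orthogonal to `U = W₁ ⊔ W₂ ⊔ F`, where `W₁`
and `W₂` witness the two given relations and orthogonality to `F = H₂ᗮ` puts a vector in `H₂`.
Since `U` need not lie in `H₁ ⊓ H₃`, it is replaced by its orthogonal projection onto `H₁ ⊓ H₃`,
which imposes the same conditions on vectors of `H₁ ⊓ H₃` and has no larger dimension.
-/

theorem orthogonal_map_eq_comap_of_isSymmetric {𝕜 E : Type*} [RCLike 𝕜]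
    [NormedAddCommGroup E] [InnerProductSpace 𝕜 E] {T : E →ₗ[𝕜] E} (hT : T.IsSymmetric)
    (U : Submodule 𝕜 E) : (U.map T)ᗮ = Uᗮ.comap T := by
  ext v
  simp [Submodule.mem_orthogonal, hT _ v]

theorem mem_orthogonal_map_starProjection_iff {𝕜 E : Type*} [RCLike 𝕜]
    [NormedAddCommGroup E] [InnerProductSpace 𝕜 E] {K : Submodule 𝕜 E}
    [K.HasOrthogonalProjection] (U : Submodule 𝕜 E) {v : E} (hv : v ∈ K) :
    v ∈ (U.map (K.starProjection : E →ₗ[𝕜] E))ᗮ ↔ v ∈ Uᗮ := by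
  rw [orthogonal_map_eq_comap_of_isSymmetric K.starProjection_isSymmetric, Submodule.mem_comap,
    ContinuousLinearMap.coe_coe, Submodule.starProjection_eq_self_iff.mpr hv]

namespace LoewnerLE

variable {H : Type*} [NormedAddCommGroup H] [InnerProductSpace ℝ H] {H₁ H₂ H₃ : Submodule ℝ H}
  {L₁ : H₁ →L[ℝ] H} {L₂ : H₂ →L[ℝ] H} {L₃ : H₃ →L[ℝ] H}

theorem of_nonneg_on_orthogonal [(H₁ ⊓ H₂).HasOrthogonalProjection] (U : Submodule ℝ H)
    [FiniteDimensional ℝ U]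
    (hU : ∀ (v : H) (h₁ : v ∈ H₁) (h₂ : v ∈ H₂), v ∈ Uᗮ → 0 ≤ ⟪L₂ ⟨v, h₂⟩ - L₁ ⟨v, h₁⟩, v⟫) :
    LoewnerLE L₁ L₂ (Module.finrank ℝ U) := by
  let P : H →ₗ[ℝ] H := (H₁ ⊓ H₂).starProjection
  refine ⟨U.map P, ?_, inferInstance, Submodule.finrank_map_le P U, fun v h₁ h₂ hv ↦ ?_⟩
  · rintro _ ⟨u, -, rfl⟩
    exact (H₁ ⊓ H₂).starProjection_apply_mem u
  · have hvK : v ∈ H₁ ⊓ H₂ := ⟨h₁, h₂⟩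
    have hvU : v ∈ Uᗮ :=
      (mem_orthogonal_map_starProjection_iff U hvK).mp ((Submodule.mem_orthogonal' _ v).mpr hv)
    exact hU v h₁ h₂ hvU

theorem mono {d d' : ℕ} (h : LoewnerLE L₁ L₂ d) (hd : d ≤ d') : LoewnerLE L₁ L₂ d' :=
  let ⟨W, hW, hfin, hdim, hnonneg⟩ := h
  ⟨W, hW, hfin, hdim.trans hd, hnonneg⟩

theorem trans'_general [(H₁ ⊓ H₃).HasOrthogonalProjection] {F : Submodule ℝ H}
    [FiniteDimensional ℝ F] {d₁ d₂ : ℕ} (h12 : LoewnerLE L₁ L₂ d₁) (h23 : LoewnerLE L₂ L₃ d₂)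
    (hF : H₁ ⊓ H₃ ⊓ Fᗮ ≤ H₂) : LoewnerLE L₁ L₃ (d₁ + d₂ + Module.finrank ℝ F) := by
  obtain ⟨W₁, -, _, hdim₁, hnonneg₁⟩ := h12
  obtain ⟨W₂, -, _, hdim₂, hnonneg₂⟩ := h23
  have hdim : Module.finrank ℝ ↥(W₁ ⊔ W₂ ⊔ F) ≤ d₁ + d₂ + Module.finrank ℝ F :=
    calc Module.finrank ℝ ↥(W₁ ⊔ W₂ ⊔ F)
      _ ≤ Module.finrank ℝ ↥(W₁ ⊔ W₂) + Module.finrank ℝ F :=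
        Submodule.finrank_add_le_finrank_add_finrank _ _
      _ ≤ Module.finrank ℝ W₁ + Module.finrank ℝ W₂ + Module.finrank ℝ F := by
        gcongr
        exact Submodule.finrank_add_le_finrank_add_finrank _ _
      _ ≤ d₁ + d₂ + Module.finrank ℝ F := by gcongr
  refine (of_nonneg_on_orthogonal (W₁ ⊔ W₂ ⊔ F) fun v h₁ h₃ hv ↦ ?_).mono hdim
  simp only [← Submodule.inf_orthogonal] at hv
  obtain ⟨⟨hvW₁, hvW₂⟩, hvF⟩ := hv
  have h₂ : v ∈ H₂ := hF ⟨⟨h₁, h₃⟩, hvF⟩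
  calc 0 ≤ ⟪L₂ ⟨v, h₂⟩ - L₁ ⟨v, h₁⟩, v⟫ + ⟪L₃ ⟨v, h₃⟩ - L₂ ⟨v, h₂⟩, v⟫ :=
        add_nonneg (hnonneg₁ v h₁ h₂ ((Submodule.mem_orthogonal' W₁ v).mp hvW₁))
          (hnonneg₂ v h₂ h₃ ((Submodule.mem_orthogonal' W₂ v).mp hvW₂))
    _ = ⟪L₃ ⟨v, h₃⟩ - L₁ ⟨v, h₁⟩, v⟫ := by rw [← inner_add_left, sub_add_sub_cancel']

end LoewnerLE

/-- Transitivity of the generalized Loewner order (remark after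
Definition 3.1 of the paper): if `L₁ ≤_{d₁} L₂` and `L₂ ≤_{d₂} L₃`, then
`L₁ ≤_{d₁+d₂+codim(H₂)} L₃`, where `codim(H₂) = dim H₂^⊥`. -/
theorem LoewnerLE.trans'
    {H : Type*} [NormedAddCommGroup H] [InnerProductSpace ℝ H] [CompleteSpace H]
    {H₁ H₂ H₃ : Submodule ℝ H}
    (hc₁ : IsClosed (H₁ : Set H)) (hc₂ : IsClosed (H₂ : Set H)) (hc₃ : IsClosed (H₃ : Set H))
    (hf₁ : FiniteDimensional ℝ H₁ᗮ) (hf₂ : FiniteDimensional ℝ H₂ᗮ)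
    (hf₃ : FiniteDimensional ℝ H₃ᗮ)
    (L₁ : H₁ →L[ℝ] H) (L₂ : H₂ →L[ℝ] H) (L₃ : H₃ →L[ℝ] H)
    (d₁ d₂ : ℕ) (h12 : LoewnerLE L₁ L₂ d₁) (h23 : LoewnerLE L₂ L₃ d₂) :
    LoewnerLE L₁ L₃ (d₁ + d₂ + Module.finrank ℝ H₂ᗮ) := by
  have : CompleteSpace ↥(H₁ ⊓ H₃) := (hc₁.inter hc₃).completeSpace_coe
  have : CompleteSpace H₂ := hc₂.completeSpace_coe
  exact h12.trans'_general h23 (inf_le_right.trans H₂.orthogonal_orthogonal.le)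
end

section
/- Let H be a real Hilbert space, let B : H × H → ℝ be a symmetric bilinear form, let n ∈ ℕ, set δ := 1/(n+2), and let c > 0. Suppose v₁, …, v_{n+1} ∈ H satisfy: B(vᵢ, vᵢ) ≥ 2 − δ for all i; |B(vᵢ, vⱼ)| ≤ δ for all i ≠ j; |⟨vᵢ, vⱼ⟩| ≤ (c/2)δ for all i ≠ j; and ‖vᵢ‖² ≤ (1 + δ)(c/2) for all i. Then for every subspace V ⊆ H with dim(V) ≤ n there exist coefficients λ₁, …, λ_{n+1} ∈ ℝ with Σᵢ λᵢ² = 1 such that the vector F := Σᵢ λᵢ vᵢ is orthogonal to V and satisfies B(F, F) ≥ 1 and ‖F‖² ≤ c. -/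
open scoped RealInnerProductSpace

/-!
If `N > dim V`, the orthogonal projections of `N` vectors to `V` are linearly dependent, so some
nontrivial combination `F = ∑ λᵢ vᵢ` is orthogonal to `V`; rescale it to `∑ λᵢ² = 1`. Off-diagonal
entries of size at most `ε` contribute at most `(N - 1) ε` to the value of a bilinear form at `F`,
because `2 |λᵢ λⱼ| ≤ λᵢ² + λⱼ²`. For `N δ ≤ 1` this gives `B(F, F) ≥ 2 - δ - (N - 1) δ ≥ 1` and
`‖F‖² ≤ (c / 2) (1 + δ + (N - 1) δ) ≤ c`.
-/

section BilinearForm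

variable {R E ι : Type*} [CommRing R] [LinearOrder R] [IsStrictOrderedRing R]
  [AddCommGroup E] [Module R E] [Fintype ι]

theorem sum_sum_mul_le_of_diag_le_of_abs_offDiag_le {A : ι → ι → R} {d ε : R}
    (hdiag : ∀ i, A i i ≤ d) (hoff : ∀ i j, i ≠ j → |A i j| ≤ ε) (l : ι → R) :
    ∑ i, ∑ j, l i * (l j * A i j) ≤ (d + (Fintype.card ι - 1) * ε) * ∑ i, l i ^ 2 := by
  classical
  have hterm (i j : ι) : 2 * (l i * (l j * A i j)) ≤
      (l i ^ 2 + l j ^ 2) * ε + if i = j then 2 * ((d - ε) * l i ^ 2) else 0 := by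
    obtain rfl | hij := eq_or_ne i j
    · rw [if_pos rfl]
      linear_combination 2 * mul_le_mul_of_nonneg_left (hdiag i) (sq_nonneg (l i))
    · rw [if_neg hij, add_zero]
      calc 2 * (l i * (l j * A i j)) ≤ |2 * (l i * (l j * A i j))| := le_abs_self _
        _ = 2 * |l i| * |l j| * |A i j| := by simp only [abs_mul, abs_two, mul_assoc]
        _ ≤ (|l i| ^ 2 + |l j| ^ 2) * ε :=
          mul_le_mul (two_mul_le_add_sq _ _) (hoff i j hij) (abs_nonneg _) (by positivity)
        _ = (l i ^ 2 + l j ^ 2) * ε := by rw [sq_abs, sq_abs]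
  refine le_of_mul_le_mul_left ?_ (zero_lt_two' R)
  calc 2 * ∑ i, ∑ j, l i * (l j * A i j)
      = ∑ i, ∑ j, 2 * (l i * (l j * A i j)) := by simp only [Finset.mul_sum]
    _ ≤ ∑ i, ∑ j, ((l i ^ 2 + l j ^ 2) * ε + if i = j then 2 * ((d - ε) * l i ^ 2) else 0) :=
      Finset.sum_le_sum fun i _ => Finset.sum_le_sum fun j _ => hterm i j
    _ = 2 * ((d + (Fintype.card ι - 1) * ε) * ∑ i, l i ^ 2) := by
      simp only [Finset.sum_add_distrib, Finset.sum_ite_eq, Finset.mem_univ, if_true,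
        ← Finset.mul_sum, ← Finset.sum_mul, Finset.sum_const, Finset.card_univ, nsmul_eq_mul]
      ring

theorem bilin_sum_smul_self_le (B : E →ₗ[R] E →ₗ[R] R) {v : ι → E} {d ε : R}
    (hdiag : ∀ i, B (v i) (v i) ≤ d) (hoff : ∀ i j, i ≠ j → |B (v i) (v j)| ≤ ε) (l : ι → R) :
    B (∑ i, l i • v i) (∑ i, l i • v i) ≤ (d + (Fintype.card ι - 1) * ε) * ∑ i, l i ^ 2 := by
  simpa only [map_sum, map_smul, LinearMap.sum_apply, LinearMap.smul_apply, smul_eq_mul,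
    Finset.mul_sum] using sum_sum_mul_le_of_diag_le_of_abs_offDiag_le
      (A := fun i j => B (v j) (v i)) hdiag (fun i j hij => hoff j i hij.symm) l

theorem le_bilin_sum_smul_self (B : E →ₗ[R] E →ₗ[R] R) {v : ι → E} {d ε : R}
    (hdiag : ∀ i, d ≤ B (v i) (v i)) (hoff : ∀ i j, i ≠ j → |B (v i) (v j)| ≤ ε) (l : ι → R) :
    (d - (Fintype.card ι - 1) * ε) * ∑ i, l i ^ 2 ≤ B (∑ i, l i • v i) (∑ i, l i • v i) := by
  have hneg := bilin_sum_smul_self_le (-B) (v := v) (d := -d) (ε := ε)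
    (fun i => neg_le_neg (hdiag i))
    (fun i j hij => by simpa only [LinearMap.neg_apply, abs_neg] using hoff i j hij) l
  simp only [LinearMap.neg_apply] at hneg
  linear_combination hneg

end BilinearForm

theorem norm_sum_smul_sq_le {H ι : Type*} [SeminormedAddCommGroup H] [InnerProductSpace ℝ H]
    [Fintype ι] {v : ι → H} {d ε : ℝ} (hdiag : ∀ i, ‖v i‖ ^ 2 ≤ d)
    (hoff : ∀ i j, i ≠ j → |⟪v i, v j⟫| ≤ ε) (l : ι → ℝ) :
    ‖∑ i, l i • v i‖ ^ 2 ≤ (d + (Fintype.card ι - 1) * ε) * ∑ i, l i ^ 2 := by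
  simp only [← real_inner_self_eq_norm_sq] at hdiag ⊢
  exact bilin_sum_smul_self_le (innerₗ H) hdiag hoff l

theorem exists_ne_zero_sum_smul_mem_orthogonal {𝕜 E ι : Type*} [RCLike 𝕜]
    [NormedAddCommGroup E] [InnerProductSpace 𝕜 E] [Fintype ι] (v : ι → E) {V : Submodule 𝕜 E}
    (hV : Module.rank 𝕜 V < Fintype.card ι) :
    ∃ l : ι → 𝕜, l ≠ 0 ∧ ∑ i, l i • v i ∈ Vᗮ := by
  have : FiniteDimensional 𝕜 V :=
    Module.rank_lt_aleph0_iff.1 (hV.trans Cardinal.natCast_lt_aleph0)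
  have hdep : ¬ LinearIndependent 𝕜 fun i => V.orthogonalProjectionOnto (v i) := fun hli => by
    rw [← Module.finrank_eq_rank, Nat.cast_lt] at hV
    exact hV.not_ge hli.fintype_card_le_finrank
  obtain ⟨l, hl, i, hi⟩ := Fintype.not_linearIndependent_iff.1 hdep
  refine ⟨l, Function.ne_iff.2 ⟨i, hi⟩, ?_⟩
  rw [← Submodule.orthogonalProjectionOnto_eq_zero_iff]
  simpa only [map_sum, map_smul] using hl

theorem exists_sum_sq_smul_eq_one {ι : Type*} [Fintype ι] {l : ι → ℝ} (hl : l ≠ 0) :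
    ∃ r : ℝ, ∑ i, (r • l) i ^ 2 = 1 := by
  have hpos : 0 < ∑ i, l i ^ 2 := by
    obtain ⟨i, hi⟩ := Function.ne_iff.1 hl
    exact Finset.sum_pos' (fun j _ => sq_nonneg (l j)) ⟨i, Finset.mem_univ i, sq_pos_of_ne_zero hi⟩
  refine ⟨(√(∑ i, l i ^ 2))⁻¹, ?_⟩
  simp only [Pi.smul_apply, smul_eq_mul, mul_pow, ← Finset.mul_sum, inv_pow,
    Real.sq_sqrt hpos.le, inv_mul_cancel₀ hpos.ne']

theorem exists_sum_sq_eq_one_sum_smul_mem_orthogonal {H ι : Type*} [NormedAddCommGroup H]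
    [InnerProductSpace ℝ H] [Fintype ι] (v : ι → H) {V : Submodule ℝ H}
    (hV : Module.rank ℝ V < Fintype.card ι) :
    ∃ l : ι → ℝ, ∑ i, l i ^ 2 = 1 ∧ ∑ i, l i • v i ∈ Vᗮ := by
  obtain ⟨l, hl, hlV⟩ := exists_ne_zero_sum_smul_mem_orthogonal v hV
  obtain ⟨r, hr⟩ := exists_sum_sq_smul_eq_one hl
  refine ⟨r • l, hr, ?_⟩
  simpa only [Pi.smul_apply, smul_assoc, ← Finset.smul_sum] using Vᗮ.smul_mem r hlV

theorem exists_comb_orth_of_approx_orthogonal_general {H ι : Type*} [NormedAddCommGroup H]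
    [InnerProductSpace ℝ H] [Fintype ι] (B : H →ₗ[ℝ] H →ₗ[ℝ] ℝ) {δ c : ℝ}
    (hδ : Fintype.card ι * δ ≤ 1) (hc : 0 ≤ c) (v : ι → H)
    (hBdiag : ∀ i, 2 - δ ≤ B (v i) (v i))
    (hBoff : ∀ i j, i ≠ j → |B (v i) (v j)| ≤ δ)
    (hoff : ∀ i j, i ≠ j → |⟪v i, v j⟫| ≤ c / 2 * δ)
    (hdiag : ∀ i, ‖v i‖ ^ 2 ≤ (1 + δ) * (c / 2))
    (V : Submodule ℝ H) (hV : Module.rank ℝ V < Fintype.card ι) :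
    ∃ l : ι → ℝ, ∑ i, l i ^ 2 = 1 ∧
      (∀ w ∈ V, ⟪∑ i, l i • v i, w⟫ = 0) ∧
      1 ≤ B (∑ i, l i • v i) (∑ i, l i • v i) ∧
      ‖∑ i, l i • v i‖ ^ 2 ≤ c := by
  obtain ⟨l, hl, hlV⟩ := exists_sum_sq_eq_one_sum_smul_mem_orthogonal v hV
  have hB := le_bilin_sum_smul_self B hBdiag hBoff l
  have hnorm := norm_sum_smul_sq_le hdiag hoff l
  rw [hl] at hB hnorm
  refine ⟨l, hl, (V.mem_orthogonal' _).1 hlV, ?_, ?_⟩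
  · linear_combination hB + hδ
  · linear_combination hnorm + c / 2 * hδ

/-- (abstract content of Lemma 5.6(c) of the paper): given `n+1` vectors
`v₁,…,v_{n+1}` in a real Hilbert space that are approximately normalized and approximately
orthogonal with respect to a symmetric bilinear form `B` and the inner product (with tolerance
`δ = 1/(n+2)`), every subspace `V` of dimension at most `n` admits a normalized linear
combination `F = Σ λᵢ vᵢ` with `Σ λᵢ² = 1` that is orthogonal to `V` and satisfies
`B(F,F) ≥ 1` and `‖F‖² ≤ c`. -/
theorem exists_comb_orth_of_approx_orthogonal
    {H : Type*} [NormedAddCommGroup H] [InnerProductSpace ℝ H] [CompleteSpace H]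
    (B : H →ₗ[ℝ] H →ₗ[ℝ] ℝ) (hBsymm : ∀ x y, B x y = B y x)
    (n : ℕ) (δ : ℝ) (hδ : δ = 1 / (n + 2)) (c : ℝ) (hc : 0 < c)
    (v : Fin (n + 1) → H)
    (h1 : ∀ i, 2 - δ ≤ B (v i) (v i))
    (h2 : ∀ i j, i ≠ j → |B (v i) (v j)| ≤ δ)
    (h3 : ∀ i j, i ≠ j → |⟪v i, v j⟫| ≤ (c / 2) * δ)
    (h4 : ∀ i, ‖v i‖ ^ 2 ≤ (1 + δ) * (c / 2)) :
    ∀ V : Submodule ℝ H, Module.rank ℝ V ≤ n →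
      ∃ lam : Fin (n + 1) → ℝ, ∑ i, lam i ^ 2 = 1 ∧
        (∀ w ∈ V, ⟪∑ i, lam i • v i, w⟫ = 0) ∧
        1 ≤ B (∑ i, lam i • v i) (∑ i, lam i • v i) ∧
        ‖∑ i, lam i • v i‖ ^ 2 ≤ c := by
  intro V hV
  refine exists_comb_orth_of_approx_orthogonal_general B ?_ hc.le v h1 h2 h3 h4 V ?_
  · rw [Fintype.card_fin, hδ, mul_one_div, div_le_one (by positivity)]
    push_cast
    linarith
  · rw [Fintype.card_fin]
    exact hV.trans_lt (Nat.cast_lt.2 n.lt_succ_self)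
end
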